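/- Let P ⊆ ℝ^d be a d-dimensional simplicial reflexive polytope. Assume that for every facet F of P there are at least d−1 vertices v ∈ 𝒱(F) whose neighboring vertex n(F,v) satisfies ⟨u_F, n(F,v)⟩ = 0. Then there exists a facet G of P such that 𝒱(G) is a ℤ-basis of the lattice ℤ^d. -/

import Mathlib

noncomputable section

/-- The standard inner product on `ℝ^d`. -/
def dotp {d : ℕ} (x y : Fin d → ℝ) : ℝ := ∑ i, x i * y i

/-- `x` is a point of the lattice `ℤ^d`. -/
def IsLP {d : ℕ} (x : Fin d → ℝ) : Prop := ∀ i, ∃ n : ℤ, x i = (n : ℝ)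

/-- A lattice polytope: convex hull of finitely many lattice points. -/
def IsLatticePolytope {d : ℕ} (P : Set (Fin d → ℝ)) : Prop :=
  ∃ V : Finset (Fin d → ℝ), (∀ v ∈ V, IsLP v) ∧ P = convexHull ℝ (V : Set (Fin d → ℝ))

/-- The dual polytope `P* = {x | ⟨x,y⟩ ≤ 1 ∀ y ∈ P}`. -/
def dualPolytope {d : ℕ} (P : Set (Fin d → ℝ)) : Set (Fin d → ℝ) :=
  {x | ∀ y ∈ P, dotp x y ≤ 1}

/-- `P` is a reflexive polytope: a (`d`-dimensional) lattice polytope with `0` in its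
interior whose dual is again a lattice polytope. -/
def IsReflexive {d : ℕ} (P : Set (Fin d → ℝ)) : Prop :=
  IsLatticePolytope P ∧ (0 : Fin d → ℝ) ∈ interior P ∧ IsLatticePolytope (dualPolytope P)

/-- `F` is a facet of `P` with (uniquely determined) outer normal `u`, normalized by
`⟨u, F⟩ = 1` (possible since `0` is in the interior of `P`). -/
def IsFacetNormal {d : ℕ} (P F : Set (Fin d → ℝ)) (u : Fin d → ℝ) : Prop :=
  F.Nonempty ∧ (∀ y ∈ P, dotp u y ≤ 1) ∧ F = {y ∈ P | dotp u y = 1} ∧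
    Module.finrank ℝ (vectorSpan ℝ F) = d - 1

/-- `F` is a facet of `P`. -/
def IsFacet {d : ℕ} (P F : Set (Fin d → ℝ)) : Prop := ∃ u, IsFacetNormal P F u

/-- `P` is simplicial: every facet has exactly `d` vertices. -/
def IsSimplicial {d : ℕ} (P : Set (Fin d → ℝ)) : Prop :=
  ∀ F, IsFacet P F → (Set.extremePoints ℝ F).ncard = d

/-- `F'` is the neighboring facet `N(F,w)`: a facet different from `F` containing all
vertices of `F` except `w`. -/
def NbrFacet {d : ℕ} (P F : Set (Fin d → ℝ)) (w : Fin d → ℝ) (F' : Set (Fin d → ℝ)) : Prop :=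
  IsFacet P F' ∧ F' ≠ F ∧ Set.extremePoints ℝ F \ {w} ⊆ F'

/-- `v'` is the neighboring vertex `n(F,w)`: the vertex of the neighboring facet `N(F,w)`
not contained in `F`. -/
def NbrVertex {d : ℕ} (P F : Set (Fin d → ℝ)) (w v' : Fin d → ℝ) : Prop :=
  ∃ F', NbrFacet P F w F' ∧ v' ∈ Set.extremePoints ℝ F' ∧ v' ∉ F

/-- The set `B` is a `ℤ`-basis of the lattice `ℤ^d`. -/
def IsZBasis {d : ℕ} (B : Set (Fin d → ℝ)) : Prop :=
  ∃ b : Fin d → (Fin d → ℝ), Function.Injective b ∧ Set.range b = B ∧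
    (∀ i, IsLP (b i)) ∧ ∀ x : Fin d → ℝ, IsLP x → ∃ c : Fin d → ℤ, x = ∑ i, (c i : ℝ) • b i

/-- The linear functional `y ↦ ⟨u, y⟩`. -/
def dotL {d : ℕ} (u : Fin d → ℝ) : (Fin d → ℝ) →ₗ[ℝ] ℝ where
  toFun y := dotp u y
  map_add' x y := by simp [dotp, mul_add, Finset.sum_add_distrib]
  map_smul' c x := by
    simp only [dotp, Pi.smul_apply, smul_eq_mul, RingHom.id_apply, Finset.mul_sum]
    exact Finset.sum_congr rfl fun i _ => by ring

lemma dotL_apply {d : ℕ} (u y : Fin d → ℝ) : dotL u y = dotp u y := rfl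

lemma dotp_add_left {d : ℕ} (u v y : Fin d → ℝ) : dotp (u + v) y = dotp u y + dotp v y := by
  simp [dotp, add_mul, Finset.sum_add_distrib]

lemma dotp_smul_left {d : ℕ} (c : ℝ) (u y : Fin d → ℝ) : dotp (c • u) y = c * dotp u y := by
  simp [dotp, Finset.mul_sum, mul_assoc]

lemma exists_vec {d : ℕ} (f : (Fin d → ℝ) →ₗ[ℝ] ℝ) : ∃ z : Fin d → ℝ, ∀ y, dotp z y = f y := by
  refine ⟨fun i => f (Pi.single i 1), fun y => ?_⟩
  rw [f.pi_apply_eq_sum_univ y]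
  refine Finset.sum_congr rfl fun i _ => ?_
  rw [smul_eq_mul, mul_comm]
  have e : (fun j => if i = j then (1 : ℝ) else 0) = Pi.single i 1 := by
    ext j
    simp [Pi.single_apply, eq_comm]
  rw [e]

lemma dotp_int {d : ℕ} {u x : Fin d → ℝ} (hu : IsLP u) (hx : IsLP x) : ∃ n : ℤ, dotp u x = n := by
  choose a ha using hu
  choose b hb using hx
  exact ⟨∑ i, a i * b i, by simp [dotp, ha, hb]⟩

lemma eq_of_dotp_span {d : ℕ} {S : Set (Fin d → ℝ)} (hS : Submodule.span ℝ S = ⊤)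
    {u v : Fin d → ℝ} (h : ∀ y ∈ S, dotp u y = dotp v y) : u = v := by
  have h1 : dotL u = dotL v := LinearMap.ext_on hS h
  ext i
  have := congrArg (fun f => f (Pi.single i (1 : ℝ))) h1
  simpa [dotL_apply, dotp, Pi.single_apply] using this

/-- The face cut out by `u`. -/
def faceOf {d : ℕ} (P : Set (Fin d → ℝ)) (u : Fin d → ℝ) : Set (Fin d → ℝ) :=
  {y ∈ P | dotp u y = 1}

lemma vectorSpan_face_le {d : ℕ} (P : Set (Fin d → ℝ)) (u : Fin d → ℝ) :
    vectorSpan ℝ (faceOf P u) ≤ LinearMap.ker (dotL u) := by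
  rw [vectorSpan_def, Submodule.span_le]
  rintro _ ⟨a, ha, b, hb, rfl⟩
  simp only [SetLike.mem_coe, LinearMap.mem_ker, vsub_eq_sub, map_sub, dotL_apply]
  rw [ha.2, hb.2, sub_self]

lemma span_face_of_facet {d : ℕ} {P : Set (Fin d → ℝ)} {u : Fin d → ℝ}
    (h : IsFacetNormal P (faceOf P u) u) :
    Submodule.span ℝ (faceOf P u) = ⊤ := by
  obtain ⟨⟨p, hp⟩, -, -, hf⟩ := h
  have h1 : vectorSpan ℝ (faceOf P u) < Submodule.span ℝ (faceOf P u) := by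
    refine lt_of_le_of_ne ?_ ?_
    · rw [vectorSpan_def, Submodule.span_le]
      rintro _ ⟨a, ha, b, hb, rfl⟩
      exact Submodule.sub_mem _ (Submodule.subset_span ha) (Submodule.subset_span hb)
    · intro h
      have h2 : p ∈ vectorSpan ℝ (faceOf P u) := h ▸ Submodule.subset_span hp
      have h3 := vectorSpan_face_le P u h2
      rw [LinearMap.mem_ker, dotL_apply, hp.2] at h3
      norm_num at h3
  have h2 := Submodule.finrank_lt_finrank_of_lt h1
  have h3 := Submodule.finrank_le (Submodule.span ℝ (faceOf P u))
  apply Submodule.eq_top_of_finrank_eq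
  rw [Module.finrank_fin_fun] at *
  omega

lemma facet_of_span {d : ℕ} (hd : 1 ≤ d) {P : Set (Fin d → ℝ)} {u : Fin d → ℝ}
    (hu : ∀ y ∈ P, dotp u y ≤ 1) (hspan : Submodule.span ℝ (faceOf P u) = ⊤) :
    IsFacetNormal P (faceOf P u) u := by
  have hne : (faceOf P u).Nonempty := by
    by_contra hne
    rw [Set.not_nonempty_iff_eq_empty] at hne
    rw [hne, Submodule.span_empty] at hspan
    have := congrArg (fun S => Module.finrank ℝ (S : Submodule ℝ (Fin d → ℝ))) hspan
    simp at this
    omega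
  refine ⟨hne, hu, rfl, ?_⟩
  obtain ⟨p, hp⟩ := hne
  have h0 : dotL u ≠ 0 := by
    intro h
    have := congrArg (fun f => f p) h
    simp [dotL_apply, hp.2] at this
  have h1 := Module.Dual.finrank_ker_add_one_of_ne_zero h0
  have h2 := Submodule.finrank_mono (vectorSpan_face_le P u)
  have h3 : Submodule.span ℝ (faceOf P u) ≤ vectorSpan ℝ (faceOf P u) ⊔ Submodule.span ℝ {p} := by
    rw [Submodule.span_le]
    intro y hy
    have : y = (y - p) + p := by simp
    rw [this]
    exact Submodule.add_mem_sup (vsub_mem_vectorSpan ℝ hy hp)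
      (Submodule.mem_span_singleton_self p)
  rw [hspan, top_le_iff] at h3
  have h4 := Submodule.finrank_add_le_finrank_add_finrank (vectorSpan ℝ (faceOf P u))
    (Submodule.span ℝ {p})
  have h5 := finrank_span_singleton (K := ℝ) (v := p) (by
    rintro rfl
    have := hp.2
    simp [dotp] at this)
  rw [h3, finrank_top, Module.finrank_fin_fun, h5] at h4
  rw [Module.finrank_fin_fun] at h1
  omega

lemma face_extreme {d : ℕ} {P : Set (Fin d → ℝ)} {u : Fin d → ℝ}
    (hu : ∀ y ∈ P, dotp u y ≤ 1) : IsExtreme ℝ P (faceOf P u) := by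
  refine ⟨fun y hy => hy.1, ?_⟩
  rintro x hx y hy z hz ⟨a, b, ha, hb, hab, rfl⟩
  refine ⟨hx, le_antisymm (hu x hx) ?_⟩
  have h1 := hz.2
  rw [← dotL_apply, map_add, map_smul, map_smul, dotL_apply, dotL_apply, smul_eq_mul,
    smul_eq_mul] at h1
  have h2 := hu x hx
  have h3 := hu y hy
  by_contra hlt
  push Not at hlt
  nlinarith

lemma face_conv {d : ℕ} {P : Set (Fin d → ℝ)} (hP : IsLatticePolytope P) {u : Fin d → ℝ}
    (hu : ∀ y ∈ P, dotp u y ≤ 1) :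
    faceOf P u = convexHull ℝ ((faceOf P u).extremePoints ℝ) := by
  obtain ⟨V, hV, rfl⟩ := hP
  set P := convexHull ℝ (V : Set (Fin d → ℝ))
  have hc : IsCompact P := V.finite_toSet.isCompact_convexHull ℝ
  have hcont : Continuous (fun y => dotp u y) := by unfold dotp; fun_prop
  have hF : faceOf P u = P ∩ (dotL u) ⁻¹' {1} := rfl
  have h1 : IsCompact (faceOf P u) :=
    hF ▸ hc.inter_right (isClosed_singleton.preimage hcont)
  have h2 : Convex ℝ (faceOf P u) :=
    hF ▸ (convex_convexHull ℝ _).inter ((convex_singleton 1).linear_preimage (dotL u))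
  have hfin : ((faceOf P u).extremePoints ℝ).Finite :=
    V.finite_toSet.subset ((face_extreme hu).extremePoints_subset_extremePoints.trans
      extremePoints_convexHull_subset)
  have h3 := closure_convexHull_extremePoints h1 h2
  rw [(hfin.isClosed_convexHull ℝ).closure_eq] at h3
  exact h3.symm

lemma ext_LP {d : ℕ} {P : Set (Fin d → ℝ)} (hP : IsLatticePolytope P) {x : Fin d → ℝ}
    (hx : x ∈ P.extremePoints ℝ) : IsLP x := by
  obtain ⟨V, hV, rfl⟩ := hP
  exact hV x (extremePoints_convexHull_subset hx)

lemma normal_LP {d : ℕ} {P : Set (Fin d → ℝ)} (hP : IsLatticePolytope (dualPolytope P))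
    {u : Fin d → ℝ} (h : IsFacetNormal P (faceOf P u) u) : IsLP u := by
  refine ext_LP hP ⟨h.2.1, ?_⟩
  intro x hx y hy ⟨a, b, ha, hb, hab, hxy⟩
  refine eq_of_dotp_span (span_face_of_facet h) fun z hz => ?_
  have h1 := hz.2
  have h2 := hx z hz.1
  have h3 := hy z hz.1
  rw [h1]
  rw [← hxy, dotp_add_left, dotp_smul_left, dotp_smul_left] at h1
  by_contra hne
  have : dotp x z < 1 := lt_of_le_of_ne h2 hne
  nlinarith

lemma le_of_vertices {d : ℕ} {V : Finset (Fin d → ℝ)} {u : Fin d → ℝ} {c : ℝ}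
    (h : ∀ v ∈ V, dotp u v ≤ c) : ∀ y ∈ convexHull ℝ (V : Set (Fin d → ℝ)), dotp u y ≤ c := by
  have h1 : convexHull ℝ (V : Set (Fin d → ℝ)) ⊆ {y | dotL u y ≤ c} :=
    convexHull_min h (convex_halfSpace_le (dotL u).isLinear c)
  exact h1

lemma exists_facet {d : ℕ} (hd : 1 ≤ d) {P : Set (Fin d → ℝ)} (hP : IsReflexive P) :
    ∃ u, IsFacetNormal P (faceOf P u) u := by
  obtain ⟨⟨V, hV, rfl⟩, h0, W, hW, hWd⟩ := hP
  set P := convexHull ℝ (V : Set (Fin d → ℝ))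
  have hc : IsCompact (dualPolytope P) := hWd ▸ W.finite_toSet.isCompact_convexHull ℝ
  obtain ⟨u, hu⟩ := hc.extremePoints_nonempty ⟨0, fun y _ => by simp [dotp]⟩
  refine ⟨u, facet_of_span hd hu.1 ?_⟩
  by_contra hne
  obtain ⟨f, hf0, hf⟩ := Submodule.exists_le_ker_of_lt_top _ (lt_top_iff_ne_top.2 hne)
  obtain ⟨z, hz⟩ := exists_vec f
  have hev : ∀ v ∈ V, ∀ᶠ ε : ℝ in nhdsWithin 0 (Set.Ioi 0),
      dotp u v + ε * dotp z v ≤ 1 ∧ dotp u v - ε * dotp z v ≤ 1 := by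
    intro v hv
    have hvP : v ∈ P := subset_convexHull ℝ _ hv
    rcases (hu.1 v hvP).lt_or_eq with hlt | heq
    · have c1 : Filter.Tendsto (fun ε : ℝ => dotp u v + ε * dotp z v) (nhds 0)
          (nhds (dotp u v + 0 * dotp z v)) := Continuous.tendsto (by fun_prop) 0
      have c2 : Filter.Tendsto (fun ε : ℝ => dotp u v - ε * dotp z v) (nhds 0)
          (nhds (dotp u v - 0 * dotp z v)) := Continuous.tendsto (by fun_prop) 0
      have e1 := c1.eventually_le_const (u := 1) (by simpa using hlt)
      have e2 := c2.eventually_le_const (u := 1) (by simpa using hlt)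
      exact (e1.and e2).filter_mono nhdsWithin_le_nhds
    · have hzv : dotp z v = 0 := by
        rw [hz]; exact hf (Submodule.subset_span ⟨hvP, heq⟩)
      simp [hzv, heq]
  obtain ⟨ε, hε, hpos⟩ := (((Filter.eventually_all_finset V).2 hev).and
    self_mem_nhdsWithin).exists
  have hpos : 0 < ε := hpos
  have m1 : u + ε • z ∈ dualPolytope P := le_of_vertices fun v hv => by
    rw [dotp_add_left, dotp_smul_left]; exact (hε v hv).1
  have m2 : u + (-ε) • z ∈ dualPolytope P := le_of_vertices fun v hv => by
    rw [dotp_add_left, dotp_smul_left]; linarith [(hε v hv).2]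
  have := hu.2 m1 m2 ⟨1/2, 1/2, by norm_num, by norm_num, by norm_num, by
    ext i; simp; ring⟩
  have hz0 : z = 0 := by
    have : ε • z = 0 := by simpa using this
    exact (smul_eq_zero.1 this).resolve_left hpos.ne'
  apply hf0
  ext y
  simp [← hz, hz0, dotp]

lemma exists_neg {d : ℕ} {V : Finset (Fin d → ℝ)}
    (h0 : (0 : Fin d → ℝ) ∈ interior (convexHull ℝ (V : Set (Fin d → ℝ))))
    {z w : Fin d → ℝ} (hzw : dotp z w = 1) : ∃ v ∈ V, dotp z v < 0 := by
  by_contra hcon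
  push Not at hcon
  have h1 : ∀ y ∈ convexHull ℝ (V : Set (Fin d → ℝ)), 0 ≤ dotp z y := by
    intro y hy
    have := le_of_vertices (V := V) (u := (-1 : ℝ) • z) (c := 0) (fun v hv => by
      rw [dotp_smul_left]; linarith [hcon v hv]) y hy
    rw [dotp_smul_left] at this
    linarith
  have hc : Filter.Tendsto (fun ε : ℝ => (-ε) • w) (nhds 0) (nhds ((-(0:ℝ)) • w)) :=
    Continuous.tendsto (by fun_prop) 0
  rw [neg_zero, zero_smul] at hc
  have hev := (hc.eventually (mem_interior_iff_mem_nhds.1 h0)).filter_mono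
    (nhdsWithin_le_nhds (s := Set.Ioi 0))
  obtain ⟨ε, hε, hpos⟩ := (hev.and self_mem_nhdsWithin).exists
  have hpos : 0 < ε := hpos
  have := h1 _ hε
  rw [← dotL_apply, map_smul, dotL_apply, hzw, smul_eq_mul] at this
  linarith

lemma facet_basis {d : ℕ} {P : Set (Fin d → ℝ)} (hP : IsLatticePolytope P) {u : Fin d → ℝ}
    (h : IsFacetNormal P (faceOf P u) u) {b : Fin d → Fin d → ℝ}
    (hb : Set.range b = (faceOf P u).extremePoints ℝ) :
    ∃ B : Module.Basis (Fin d) ℝ (Fin d → ℝ), ⇑B = b := by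
  have h1 : ⊤ ≤ Submodule.span ℝ (Set.range b) := by
    rw [← span_face_of_facet h, Submodule.span_le]
    nth_rw 1 [face_conv hP h.2.1]
    rw [hb]
    exact convexHull_min Submodule.subset_span (Submodule.convex _)
  have h2 := linearIndependent_of_top_le_span_of_card_eq_finrank h1 (by simp)
  exact ⟨Module.Basis.mk h2 h1, by simp⟩

lemma exists_enum {d : ℕ} (hd : 1 ≤ d) {S : Set (Fin d → ℝ)} (hS : S.ncard = d) :
    ∃ b : Fin d → Fin d → ℝ, Function.Injective b ∧ Set.range b = S := by
  have hfin : S.Finite := Set.finite_of_ncard_ne_zero (by omega)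
  have : Finite S := hfin
  let e := Finite.equivFinOfCardEq (α := S) (n := d) hS
  refine ⟨fun i => (e.symm i : Fin d → ℝ), Subtype.val_injective.comp e.symm.injective, ?_⟩
  ext x
  constructor
  · rintro ⟨i, rfl⟩; exact (e.symm i).2
  · intro hx; exact ⟨e ⟨x, hx⟩, by simp⟩

lemma coord_nonneg {d : ℕ} {P : Set (Fin d → ℝ)} (hP : IsLatticePolytope P) {u : Fin d → ℝ}
    (hu : ∀ y ∈ P, dotp u y ≤ 1) (B : Module.Basis (Fin d) ℝ (Fin d → ℝ))
    (hb : Set.range B = (faceOf P u).extremePoints ℝ) (i : Fin d) {y : Fin d → ℝ}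
    (hy : y ∈ faceOf P u) : 0 ≤ B.coord i y := by
  rw [face_conv hP hu, ← hb] at hy
  have h1 : convexHull ℝ (Set.range B) ⊆ {y | 0 ≤ B.coord i y} := by
    refine convexHull_min ?_ (convex_halfSpace_ge (B.coord i).isLinear 0)
    rintro _ ⟨j, rfl⟩
    simp only [Set.mem_ofPred_eq, Module.Basis.coord_apply, Module.Basis.repr_self,
      Finsupp.single_apply]
    split_ifs <;> norm_num
  exact h1 hy

lemma exists_nbr {d : ℕ} (hd : 1 ≤ d) {P : Set (Fin d → ℝ)} (hP : IsReflexive P)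
    {u : Fin d → ℝ} (hu : IsFacetNormal P (faceOf P u) u)
    (B : Module.Basis (Fin d) ℝ (Fin d → ℝ))
    (hb : Set.range B = (faceOf P u).extremePoints ℝ) (i : Fin d) :
    ∃ u' t, 0 < t ∧ IsFacetNormal P (faceOf P u') u' ∧
      ∀ y, dotp u' y = dotp u y - t * B.coord i y := by
  have hPL := hP.1
  obtain ⟨⟨V, hV, rfl⟩, h0, -⟩ := hP
  set P := convexHull ℝ (V : Set (Fin d → ℝ)) with hPdef
  obtain ⟨z, hz⟩ := exists_vec (B.coord i)
  obtain ⟨v0, hv0, hneg0⟩ := exists_neg h0 (z := z) (w := B i) (by simp [hz])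
  obtain ⟨y0, hy0, hmin⟩ := Finset.exists_min_image (V.filter fun v => dotp z v < 0)
    (fun v => (1 - dotp u v) / (-dotp z v)) ⟨v0, Finset.mem_filter.2 ⟨hv0, hneg0⟩⟩
  rw [Finset.mem_filter] at hy0
  obtain ⟨hy0V, hy0n⟩ := hy0
  have hy0P : y0 ∈ P := subset_convexHull ℝ _ hy0V
  set t := (1 - dotp u y0) / (-dotp z y0) with ht
  have htpos : 0 < t := by
    apply div_pos _ (by linarith)
    have h1 := hu.2.1 y0 hy0P
    rcases h1.lt_or_eq with h1 | h1
    · linarith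
    · have := coord_nonneg hPL hu.2.1 B hb i (y := y0) ⟨hy0P, h1⟩
      rw [← hz] at this
      linarith
  have hdot : ∀ y, dotp (u + (-t) • z) y = dotp u y - t * B.coord i y := by
    intro y; rw [dotp_add_left, dotp_smul_left, hz]; ring
  refine ⟨u + (-t) • z, t, htpos, facet_of_span hd ?_ ?_, hdot⟩
  · refine le_of_vertices fun v hv => ?_
    have hvu := hu.2.1 v (subset_convexHull ℝ _ hv)
    rw [hdot, ← hz]
    rcases lt_or_ge (dotp z v) 0 with hn | hn
    · have := hmin v (Finset.mem_filter.2 ⟨hv, hn⟩)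
      rw [le_div_iff₀ (by linarith)] at this
      linarith
    · nlinarith
  · have hBj : ∀ j, j ≠ i → B j ∈ Submodule.span ℝ (faceOf P (u + (-t) • z)) := by
      intro j hj
      have hm : B j ∈ faceOf P u := extremePoints_subset (hb ▸ Set.mem_range_self j)
      refine Submodule.subset_span ⟨hm.1, ?_⟩
      rw [hdot, hm.2]
      simp [hj]
    have hy0m : y0 ∈ Submodule.span ℝ (faceOf P (u + (-t) • z)) := by
      refine Submodule.subset_span ⟨hy0P, ?_⟩
      rw [hdot, ← hz, ht]
      have : dotp z y0 ≠ 0 := hy0n.ne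
      field_simp
      ring
    rw [eq_top_iff, ← B.span_eq, Submodule.span_le]
    rintro _ ⟨j, rfl⟩
    by_cases hj : j = i
    · subst hj
      have hs := B.sum_repr y0
      rw [← Finset.add_sum_erase _ _ (Finset.mem_univ j)] at hs
      have hm2 : B.repr y0 j • B j ∈ Submodule.span ℝ (faceOf P (u + (-t) • z)) := by
        rw [eq_sub_of_add_eq hs]
        exact Submodule.sub_mem _ hy0m (Submodule.sum_mem _ fun k hk =>
          Submodule.smul_mem _ _ (hBj k (Finset.ne_of_mem_erase hk)))
      have hne : B.repr y0 j ≠ 0 := by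
        rw [← Module.Basis.coord_apply, ← hz]; exact hy0n.ne
      exact (Submodule.smul_mem_iff _ hne).1 hm2
    · exact hBj j hj

lemma exists_nbr_vertex {d : ℕ} (hd : 1 ≤ d) {P : Set (Fin d → ℝ)} (hP : IsReflexive P)
    (hs : IsSimplicial P)
    {u : Fin d → ℝ} (hu : IsFacetNormal P (faceOf P u) u)
    (B : Module.Basis (Fin d) ℝ (Fin d → ℝ))
    (hb : Set.range B = (faceOf P u).extremePoints ℝ) (i : Fin d) :
    ∃ u' t v', 0 < t ∧ IsFacetNormal P (faceOf P u') u' ∧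
      (∀ y, dotp u' y = dotp u y - t * B.coord i y) ∧ NbrVertex P (faceOf P u) (B i) v' ∧
      dotp u' v' = 1 ∧
      Function.Injective (Function.update B i v') ∧
      Set.range (Function.update B i v') = (faceOf P u').extremePoints ℝ := by
  obtain ⟨u', t, ht, hu', hdot⟩ := exists_nbr hd hP hu B hb i
  have hm : ∀ j, B j ∈ (faceOf P u).extremePoints ℝ := fun j => hb ▸ Set.mem_range_self j
  have hE := (face_extreme hu.2.1).extremePoints_eq
  have hE' := (face_extreme hu'.2.1).extremePoints_eq
  have hm' : ∀ j, j ≠ i → B j ∈ (faceOf P u').extremePoints ℝ := by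
    intro j hj
    rw [hE']
    have := hm j
    rw [hE] at this
    refine ⟨⟨this.1.1, ?_⟩, this.2⟩
    rw [hdot, this.1.2]
    simp [hj]
  have hBi : B i ∉ faceOf P u' := by
    intro h
    have h1 := h.2
    rw [hdot, (extremePoints_subset (hm i)).2] at h1
    simp at h1
    exact ht.ne' h1
  have hc := hs _ ⟨u, hu⟩
  have hc' := hs _ ⟨u', hu'⟩
  have hfin : ((faceOf P u).extremePoints ℝ).Finite := hb ▸ Set.finite_range _
  have hfin' : ((faceOf P u').extremePoints ℝ).Finite :=
    Set.finite_of_ncard_ne_zero (by omega)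
  obtain ⟨v', hv', hv'F⟩ : ∃ v' ∈ (faceOf P u').extremePoints ℝ, v' ∉ faceOf P u := by
    by_contra hcon
    push Not at hcon
    have hsub : (faceOf P u').extremePoints ℝ ⊂ (faceOf P u).extremePoints ℝ := by
      refine ⟨fun x hx => ?_, fun hh => hBi (extremePoints_subset (hh (hm i)))⟩
      have h1 := hcon x hx
      rw [hE'] at hx
      rw [hE]
      exact ⟨h1, hx.2⟩
    have := Set.ncard_lt_ncard hsub hfin
    omega
  have hinj : Function.Injective (Function.update B i v') := by
    have hne : ∀ j, B j ≠ v' := fun j h => hv'F (h ▸ extremePoints_subset (hm j))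
    intro j k hjk
    by_cases hj : j = i <;> by_cases hk : k = i
    · rw [hj, hk]
    · subst hj; simp [hk] at hjk; exact absurd hjk.symm (hne k)
    · subst hk; simp [hj] at hjk; exact absurd hjk (hne j)
    · simp [hj, hk] at hjk; exact B.injective hjk
  refine ⟨u', t, v', ht, hu', hdot, ⟨faceOf P u', ⟨⟨u', hu'⟩, ?_, ?_⟩, hv', hv'F⟩,
    (extremePoints_subset hv').2, hinj, ?_⟩
  · intro h
    exact hBi (h ▸ extremePoints_subset (hm i))
  · rintro x ⟨hx, hxi⟩
    rw [← hb] at hx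
    obtain ⟨j, rfl⟩ := hx
    exact extremePoints_subset (hm' j fun h => hxi (by simp [h]))
  · refine Set.eq_of_subset_of_ncard_le ?_ ?_ hfin'
    · rintro _ ⟨j, rfl⟩
      by_cases hj : j = i
      · subst hj; simpa using hv'
      · simpa [hj] using hm' j hj
    · rw [hc', ← Set.image_univ, Set.ncard_image_of_injective _ hinj]
      simp

lemma det_int {d : ℕ} {b : Fin d → Fin d → ℝ} (hb : ∀ i, IsLP (b i)) :
    ∃ n : ℤ, (Matrix.of b).det = n := by
  choose c hc using hb
  refine ⟨(Matrix.of c).det, ?_⟩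
  rw [Int.cast_det]
  congr 1
  ext i j
  simp [hc]

lemma det_update {d : ℕ} (B : Module.Basis (Fin d) ℝ (Fin d → ℝ)) (i : Fin d) (v : Fin d → ℝ) :
    (Matrix.of (Function.update B i v)).det = B.coord i v * (Matrix.of B).det := by
  have h := Matrix.det_updateRow_sum (Matrix.of B) i (fun k => B.repr v k)
  have h2 : ∑ k, B.repr v k • (Matrix.of B) k = v := B.sum_repr v
  rw [h2] at h
  exact h

lemma det_ne_zero_of_basis {d : ℕ} (B : Module.Basis (Fin d) ℝ (Fin d → ℝ)) :
    (Matrix.of B).det ≠ 0 := by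
  have : LinearIndependent ℝ (Matrix.of B).row := B.linearIndependent
  rw [Matrix.linearIndependent_rows_iff_isUnit, Matrix.isUnit_iff_isUnit_det] at this
  exact this.ne_zero

/-- if for every facet `F` at least `d-1` vertices of `F` have their
neighboring vertex in `H(F,0)`, then some facet `G` has vertex set a `ℤ`-basis of `ℤ^d`. -/
theorem stmt13 {d : ℕ} (hd : 1 ≤ d) (P : Set (Fin d → ℝ))
    (hP : IsReflexive P) (hs : IsSimplicial P)
    (h : ∀ F u, IsFacetNormal P F u →
      d - 1 ≤ {v ∈ Set.extremePoints ℝ F | ∀ v', NbrVertex P F v v' → dotp u v' = 0}.ncard) :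
    ∃ G, IsFacet P G ∧ IsZBasis (Set.extremePoints ℝ G) := by
  classical
  let S : Set ℕ := {n | ∃ u b, IsFacetNormal P (faceOf P u) u ∧ Function.Injective b ∧
    Set.range b = (faceOf P u).extremePoints ℝ ∧ |(Matrix.of b).det| = (n : ℝ)}
  have hLP : ∀ u b, IsFacetNormal P (faceOf P u) u →
      Set.range b = (faceOf P u).extremePoints ℝ → ∀ i : Fin d, IsLP (b i) := by
    intro u b hu hb i
    exact ext_LP hP.1 ((face_extreme hu.2.1).extremePoints_subset_extremePoints
      (hb ▸ Set.mem_range_self i))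
  have hS : ∀ u b, IsFacetNormal P (faceOf P u) u → Function.Injective b →
      Set.range b = (faceOf P u).extremePoints ℝ →
      ∃ n ∈ S, |(Matrix.of b).det| = (n : ℝ) := by
    intro u b hu hbi hb
    obtain ⟨n, hn⟩ := det_int (hLP u b hu hb)
    have e : |(Matrix.of b).det| = (n.natAbs : ℝ) := by
      rw [hn, Nat.cast_natAbs, Int.cast_abs]
    exact ⟨n.natAbs, ⟨u, b, hu, hbi, hb, e⟩, e⟩
  have hne : S.Nonempty := by
    obtain ⟨u, hu⟩ := exists_facet hd hP
    obtain ⟨b, hbi, hb⟩ := exists_enum hd (hs _ ⟨u, hu⟩)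
    obtain ⟨n, hn, -⟩ := hS u b hu hbi hb
    exact ⟨n, hn⟩
  obtain ⟨u, b, hu, hbi, hb, hdet⟩ := Nat.sInf_mem hne
  refine ⟨faceOf P u, ⟨u, hu⟩, b, hbi, hb, hLP u b hu hb, ?_⟩
  have hbLP := hLP u b hu hb
  obtain ⟨B, rfl⟩ := facet_basis hP.1 hu hb
  have huLP := normal_LP hP.2.2 hu
  have hgood : ∀ i, (∀ v', NbrVertex P (faceOf P u) (B i) v' → dotp u v' = 0) →
      ∀ x, IsLP x → ∃ n : ℤ, B.coord i x = n := by
    intro i hi x hx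
    obtain ⟨u', t, v', ht, hu', hdot, hv', hv1, hinj, hrange⟩ :=
      exists_nbr_vertex hd hP hs hu B hb i
    have hu'LP := normal_LP hP.2.2 hu'
    have hBiu : dotp u (B i) = 1 :=
      (extremePoints_subset (𝕜 := ℝ) (A := faceOf P u) (hb ▸ Set.mem_range_self i)).2
    have htint : ∃ n : ℤ, t = n := by
      obtain ⟨n, hn⟩ := dotp_int hu'LP (hbLP i)
      refine ⟨1 - n, ?_⟩
      have h1 := hdot (B i)
      rw [hn, hBiu] at h1
      simp at h1
      push_cast
      linarith
    have hc : t * B.coord i v' = -1 := by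
      have h1 := hdot v'
      rw [hv1, hi v' hv'] at h1
      linarith
    obtain ⟨m, hmS, hm⟩ := hS u' _ hu' hinj hrange
    have hle : |(Matrix.of B).det| ≤ |(Matrix.of (Function.update B i v')).det| := by
      rw [hm, hdet]
      exact_mod_cast Nat.sInf_le hmS
    rw [det_update, abs_mul] at hle
    have hpos : 0 < |(Matrix.of B).det| := abs_pos.2 (det_ne_zero_of_basis B)
    have h1 : 1 ≤ |B.coord i v'| := by
      by_contra hlt
      push Not at hlt
      nlinarith
    have h2 : t * |B.coord i v'| = 1 := by
      rw [← abs_of_pos ht, ← abs_mul, hc]; simp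
    have ht1 : t = 1 := by
      obtain ⟨n, rfl⟩ := htint
      have : (1 : ℝ) ≤ n := by exact_mod_cast (by exact_mod_cast ht : (0 : ℤ) < n)
      nlinarith
    obtain ⟨a, ha⟩ := dotp_int huLP hx
    obtain ⟨c, hc⟩ := dotp_int hu'LP hx
    refine ⟨a - c, ?_⟩
    have h3 := hdot x
    rw [ht1, ha, hc] at h3
    push_cast
    linarith
  have hsum : ∀ x, dotp u x = ∑ i, B.coord i x := by
    intro x
    have h1 : dotL u = ∑ i, B.coord i := by
      apply B.ext
      intro j
      have : dotp u (B j) = 1 :=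
        (extremePoints_subset (𝕜 := ℝ) (A := faceOf P u) (hb ▸ Set.mem_range_self j)).2
      rw [dotL_apply, this]
      simp [Finsupp.single_apply]
    rw [← dotL_apply, h1]
    simp
  have hall : ∀ i, ∀ x, IsLP x → ∃ n : ℤ, B.coord i x = n := by
    intro i x hx
    by_cases hi : ∀ v', NbrVertex P (faceOf P u) (B i) v' → dotp u v' = 0
    · exact hgood i hi x hx
    have hothers : ∀ j, j ≠ i → ∃ n : ℤ, B.coord j x = n := by
      intro j hj
      refine hgood j ?_ x hx
      by_contra hjb
      have hcard := h _ u hu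
      set G := {v ∈ Set.extremePoints ℝ (faceOf P u) |
        ∀ v', NbrVertex P (faceOf P u) v v' → dotp u v' = 0}
      have hfin : ((faceOf P u).extremePoints ℝ).Finite := hb ▸ Set.finite_range _
      have hGsub : G ⊆ (faceOf P u).extremePoints ℝ \ {B i, B j} := by
        rintro v ⟨hv, hv2⟩
        refine ⟨hv, ?_⟩
        rintro (rfl | rfl)
        · exact hi hv2
        · exact hjb hv2
      have h1 := Set.ncard_le_ncard hGsub hfin.sdiff
      have h2 := Set.ncard_sdiff_add_ncard_of_subset (s := {B i, B j})
        (t := (faceOf P u).extremePoints ℝ) (by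
          rintro _ (rfl | rfl) <;> exact hb ▸ Set.mem_range_self _) hfin
      rw [Set.ncard_pair (fun e => hj (hbi e).symm), hs _ ⟨u, hu⟩] at h2
      omega
    choose! n hn using hothers
    obtain ⟨a, ha⟩ := dotp_int huLP hx
    refine ⟨a - ∑ j ∈ Finset.univ.erase i, n j, ?_⟩
    have h1 := hsum x
    rw [← Finset.add_sum_erase _ _ (Finset.mem_univ i), ha,
      Finset.sum_congr rfl fun j hj => hn j (Finset.ne_of_mem_erase hj)] at h1
    push_cast
    linarith
  intro x hx
  choose c hc using fun i => hall i x hx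
  refine ⟨c, ?_⟩
  simp_rw [← hc]
  exact (B.sum_repr x).symm
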